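/- For every α : ℕ → {0,1,2} and every β : ℕ → {0,1}: if Φ(α) = κ(β) then γ_α(n) = β(n) for all n ∈ ℕ. -/

import Mathlib

open Filter

/-- `triN s` : numbering of the nodes of the ternary tree:
`N(⟨⟩) = 1`, `N(s * ⟨i⟩) = 2 * N(s) + i - 1`. -/
def triN (s : List (Fin 3)) : ℕ := s.foldl (fun a i => 2 * a + i.val - 1) 1

/-- Initial segment of length `n` of `α`. -/
def seg3 (α : ℕ → Fin 3) (n : ℕ) : List (Fin 3) := List.ofFn fun i : Fin n => α i

/-- `Phi α` is the limit of the Cauchy sequence `x_α^n = 2^(-(n+1)) * N(ᾱ n)`. -/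
noncomputable def Phi (α : ℕ → Fin 3) : ℝ :=
  limUnder atTop fun n => (triN (seg3 α n) : ℝ) / 2 ^ (n + 1)

/-- The rational interval `I_s = [2^(-(|s|+1))·(N s - 1), 2^(-(|s|+1))·(N s + 1)]`. -/
def Iseg (s : List (Fin 3)) : ℚ × ℚ :=
  (((triN s : ℚ) - 1) / 2 ^ (s.length + 1), ((triN s : ℚ) + 1) / 2 ^ (s.length + 1))

/-- The Cantor discontinuum map `κ(β) = Σ_i 2·β(i)·3^(-(i+1))`. -/
noncomputable def kappa (β : ℕ → Fin 2) : ℝ :=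
  ∑' i : ℕ, 2 * ((β i : ℕ) : ℝ) / 3 ^ (i + 1)

/-- The left endpoint `Σ_{i<|s|} 2·s_i·3^(-(i+1))` of the Cantor interval `C_s`. -/
def Cleft (s : List (Fin 2)) : ℚ :=
  ∑ i : Fin s.length, 2 * ((s.get i : ℕ) : ℚ) / 3 ^ ((i : ℕ) + 1)

lemma three_pow_le_two_pow (k : ℕ) : ∃ n : ℕ, 3 ^ k ≤ 2 ^ n :=
  ⟨2 * k, by
    calc (3 : ℕ) ^ k ≤ 4 ^ k := Nat.pow_le_pow_left (by norm_num) k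
      _ = 2 ^ (2 * k) := by rw [pow_mul]; norm_num⟩

/-- `L k` is the least `n` with `2^(-n) ≤ 3^(-k)`, i.e. with `3^k ≤ 2^n`. -/
def L3 (k : ℕ) : ℕ := Nat.find (three_pow_le_two_pow k)

/-- The finite binary sequence `γ̄_α n`. -/
def gammaList (α : ℕ → Fin 3) : ℕ → List (Fin 2)
  | 0 => []
  | n + 1 =>
    gammaList α n ++
      [if (Iseg (seg3 α (L3 (n + 1)))).2 < Cleft (gammaList α n ++ [1]) then 0 else 1]

/-- The binary sequence `γ_α` associated with `α : ℕ → {0,1,2}`. -/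
def gamma (α : ℕ → Fin 3) (n : ℕ) : Fin 2 :=
  if (Iseg (seg3 α (L3 (n + 1)))).2 < Cleft (gammaList α n ++ [1]) then 0 else 1

/-!
Knowing the first `n` digits of `β`, the digit `β n` decides in which outer third of the `n`-th
Cantor interval `κ β` lies; these thirds are separated by a gap of length `3^(-(n+1))`. The interval
`I_s` at depth `L (n+1)` contains `Φ α = κ β` and, since a positive power of `3` is never a power of
`2`, has length strictly less than that gap. Hence its right endpoint lies to the left of the right
third exactly when `β n = 0`, which is the test that defines `γ_α n`.
-/

section Phi

lemma triN_append_singleton (s : List (Fin 3)) (i : Fin 3) :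
    triN (s ++ [i]) = 2 * triN s + i - 1 := by
  simp [triN]

lemma triN_pos (s : List (Fin 3)) : 0 < triN s := by
  induction s using List.reverseRecOn with
  | nil => simp [triN]
  | append_singleton s i ih => rw [triN_append_singleton]; omega

lemma cast_triN_append_singleton {R : Type*} [Ring R] (s : List (Fin 3)) (i : Fin 3) :
    (triN (s ++ [i]) : R) = 2 * triN s + (i : ℕ) - 1 := by
  have one_le : 1 ≤ 2 * triN s + (i : ℕ) := by have := triN_pos s; omega
  rw [triN_append_singleton]
  push_cast [one_le]
  rfl

variable (α : ℕ → Fin 3) (n : ℕ)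

lemma length_seg3 : (seg3 α n).length = n := List.length_ofFn

lemma seg3_succ : seg3 α (n + 1) = seg3 α n ++ [α n] := by
  rw [seg3, List.ofFn_succ_last]
  rfl

-- The bound has the shape `C / 2 / 2 ^ n`, `C = 1 / 2`, of the `le_geometric_two` lemmas.
lemma dist_triN_seg3_succ_le :
    dist ((triN (seg3 α n) : ℝ) / 2 ^ (n + 1)) ((triN (seg3 α (n + 1)) : ℝ) / 2 ^ (n + 1 + 1)) ≤
      1 / 2 / 2 / 2 ^ n := by
  have digit_le : ((α n : ℕ) : ℝ) ≤ 2 := by exact_mod_cast Nat.le_of_lt_succ (α n).isLt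
  have abs_digit_le : |1 - ((α n : ℕ) : ℝ)| ≤ 1 :=
    abs_le.2 ⟨by linarith, sub_le_self _ (Nat.cast_nonneg _)⟩
  have diff_eq : (triN (seg3 α n) : ℝ) / 2 ^ (n + 1) - triN (seg3 α (n + 1)) / 2 ^ (n + 1 + 1) =
      (1 - (α n : ℕ)) / (2 ^ 2 * 2 ^ n) := by
    rw [seg3_succ, cast_triN_append_singleton]
    field_simp
    ring
  calc
    _ = |1 - ((α n : ℕ) : ℝ)| / (2 ^ 2 * 2 ^ n) := by
      rw [Real.dist_eq, diff_eq, abs_div, abs_of_pos (by positivity : (0 : ℝ) < 2 ^ 2 * 2 ^ n)]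
    _ ≤ 1 / (2 ^ 2 * 2 ^ n) := by gcongr
    _ = 1 / 2 / 2 / 2 ^ n := by ring

lemma tendsto_Phi :
    Tendsto (fun n => (triN (seg3 α n) : ℝ) / 2 ^ (n + 1)) atTop (nhds (Phi α)) :=
  (cauchySeq_of_le_geometric_two (dist_triN_seg3_succ_le α)).tendsto_limUnder

lemma Phi_mem_Icc_Iseg :
    Phi α ∈ Set.Icc ((Iseg (seg3 α n)).1 : ℝ) ((Iseg (seg3 α n)).2 : ℝ) := by
  have dist_le : dist ((triN (seg3 α n) : ℝ) / 2 ^ (n + 1)) (Phi α) ≤ 1 / 2 / 2 ^ n :=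
    dist_le_of_le_geometric_two_of_tendsto (dist_triN_seg3_succ_le α) (tendsto_Phi α) n
  rw [dist_comm, ← Metric.mem_closedBall, Real.closedBall_eq_Icc, div_div, ← pow_succ',
    ← sub_div, ← add_div] at dist_le
  simpa [Iseg, length_seg3] using dist_le

end Phi

lemma Iseg_snd_sub_fst (s : List (Fin 3)) : (Iseg s).2 - (Iseg s).1 = (2 ^ s.length)⁻¹ := by
  simp only [Iseg]
  field_simp
  ring

lemma three_pow_lt_two_pow_L3 {k : ℕ} (hk : k ≠ 0) : 3 ^ k < 2 ^ L3 k := by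
  refine lt_of_le_of_ne (Nat.find_spec (three_pow_le_two_pow k)) fun heq => ?_
  have coprime : Nat.Coprime (3 ^ k) (2 ^ L3 k) := Nat.Coprime.pow _ _ (by norm_num)
  rw [← heq, Nat.coprime_self] at coprime
  exact hk (by simpa using coprime)

lemma Iseg_snd_lt_Phi_add (α : ℕ → Fin 3) {k : ℕ} (hk : k ≠ 0) :
    ((Iseg (seg3 α (L3 k))).2 : ℝ) < Phi α + (3 ^ k)⁻¹ := by
  have fst_le : ((Iseg (seg3 α (L3 k))).1 : ℝ) ≤ Phi α := (Phi_mem_Icc_Iseg α _).1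
  have width : ((Iseg (seg3 α (L3 k))).2 : ℝ) - (Iseg (seg3 α (L3 k))).1 = (2 ^ L3 k)⁻¹ := by
    rw [← Rat.cast_sub, Iseg_snd_sub_fst, length_seg3]
    push_cast
    rfl
  have width_lt : ((2 : ℝ) ^ L3 k)⁻¹ < (3 ^ k)⁻¹ := by
    gcongr
    exact_mod_cast three_pow_lt_two_pow_L3 hk
  linarith

section Cantor

lemma Cleft_nil : Cleft [] = 0 := Fin.sum_univ_zero _

lemma Cleft_append_singleton (s : List (Fin 2)) (b : Fin 2) :
    Cleft (s ++ [b]) = Cleft s + 2 * (b : ℕ) / 3 ^ (s.length + 1) := by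
  have Cleft_eq_sum_range (t : List (Fin 2)) :
      Cleft t = ∑ i ∈ Finset.range t.length, 2 * ((t.getD i 0 : ℕ) : ℚ) / 3 ^ (i + 1) := by
    simp [Cleft, Finset.sum_range]
  rw [Cleft_eq_sum_range, Cleft_eq_sum_range, List.length_append, List.length_singleton,
    Finset.sum_range_succ]
  congr 1
  · refine Finset.sum_congr rfl fun i hi => ?_
    rw [List.getD_append _ _ _ _ (Finset.mem_range.1 hi)]
  · simp

/-- The ternary digits `2 * β i` of the point `κ β`, for comparison with `Real.ofDigits`. -/
def cantorDigits (β : ℕ → Fin 2) (i : ℕ) : Fin 3 := ⟨2 * β i, by omega⟩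

variable (β : ℕ → Fin 2) (n : ℕ)

lemma ofDigitsTerm_cantorDigits :
    Real.ofDigitsTerm (cantorDigits β) n = 2 * ((β n : ℕ) : ℝ) / 3 ^ (n + 1) := by
  simp [Real.ofDigitsTerm, cantorDigits, div_eq_mul_inv]

lemma kappa_eq_ofDigits : kappa β = Real.ofDigits (cantorDigits β) :=
  tsum_congr fun i => (ofDigitsTerm_cantorDigits β i).symm

lemma Cleft_map_range :
    (Cleft ((List.range n).map β) : ℝ) =
      ∑ i ∈ Finset.range n, Real.ofDigitsTerm (cantorDigits β) i := by
  induction n with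
  | zero => simp [Cleft_nil]
  | succ n ih =>
    rw [List.range_succ, List.map_append, List.map_singleton, Cleft_append_singleton,
      Finset.sum_range_succ, ← ih, ofDigitsTerm_cantorDigits]
    simp

lemma kappa_mem_Icc_Cleft :
    kappa β ∈ Set.Icc (Cleft ((List.range n).map β) : ℝ)
      (Cleft ((List.range n).map β) + (3 ^ n)⁻¹) := by
  rw [kappa_eq_ofDigits, Real.ofDigits_eq_sum_add_ofDigits _ n, ← Cleft_map_range]
  have tail_nonneg := Real.ofDigits_nonneg fun i => cantorDigits β (i + n)
  have tail_le_one := Real.ofDigits_le_one fun i => cantorDigits β (i + n)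
  constructor
  · exact le_add_of_nonneg_right (by positivity)
  · push_cast
    gcongr
    exact mul_le_of_le_one_right (by positivity) tail_le_one

variable {β n}

lemma lt_Cleft_append_one_iff {u : ℚ} (kappa_le : kappa β ≤ u)
    (lt_kappa_add : (u : ℝ) < kappa β + (3 ^ (n + 1))⁻¹) :
    u < Cleft ((List.range n).map β ++ [1]) ↔ β n = 0 := by
  have kappa_mem := kappa_mem_Icc_Cleft β (n + 1)
  rw [List.range_succ, List.map_append, List.map_singleton] at kappa_mem
  obtain hβ | hβ : β n = 0 ∨ β n = 1 := by omega
  · have Cleft_zero : Cleft ((List.range n).map β ++ [0]) = Cleft ((List.range n).map β) := by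
      simp [Cleft_append_singleton]
    have Cleft_one : (Cleft ((List.range n).map β ++ [1]) : ℝ) =
        Cleft ((List.range n).map β) + 2 * (3 ^ (n + 1))⁻¹ := by
      simp [Cleft_append_singleton, div_eq_mul_inv]
    rw [hβ, Cleft_zero] at kappa_mem
    refine iff_of_true ?_ hβ
    rw [← Rat.cast_lt (K := ℝ), Cleft_one]
    linarith [kappa_mem.2]
  · rw [hβ] at kappa_mem
    have Cleft_le : Cleft ((List.range n).map β ++ [1]) ≤ u := by
      exact_mod_cast kappa_mem.1.trans kappa_le
    simp [hβ, Cleft_le]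

end Cantor

lemma gammaList_eq_map_range (α : ℕ → Fin 3) (n : ℕ) :
    gammaList α n = (List.range n).map (gamma α) := by
  induction n with
  | zero => rfl
  | succ n ih => rw [List.range_succ, List.map_append, ← ih]; rfl

theorem stmt15 (α : ℕ → Fin 3) (β : ℕ → Fin 2) (h : Phi α = kappa β) :
    ∀ n : ℕ, gamma α n = β n := by
  intro n
  induction n using Nat.strong_induction_on with
  | _ n ih =>
    have prefix_eq : gammaList α n = (List.range n).map β := by
      rw [gammaList_eq_map_range]
      exact List.map_congr_left fun i hi => ih i (List.mem_range.1 hi)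
    have kappa_le : kappa β ≤ (Iseg (seg3 α (L3 (n + 1)))).2 := h ▸ (Phi_mem_Icc_Iseg α _).2
    have lt_kappa_add : ((Iseg (seg3 α (L3 (n + 1)))).2 : ℝ) < kappa β + (3 ^ (n + 1))⁻¹ :=
      h ▸ Iseg_snd_lt_Phi_add α n.succ_ne_zero
    simp only [gamma, prefix_eq, lt_Cleft_append_one_iff kappa_le lt_kappa_add]
    split_ifs <;> omega
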